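/- arXiv:2102.01149 — 2 statements merged into one kernel-verified Lean document; each statement's English description precedes it below -/
import Mathlib

section
/- The expected cost of the adaptive greedy policy satisfies E[C(σ)] ≤ α·E[C(π*)]·Σ_{i=1}^{|N(σ)|} ε_i/(Q − f(ρ_i)). -/
/-!
Common framework for the Stochastic Submodular Cover problem
(Hellerstein–Kletenik–Parthasarathy, "A Tight Bound for Stochastic Submodular Cover").
-/

namespace SSC

open Finset
open scoped Classical

noncomputable section

variable {E O : Type*}

/-- A subrealization assigns to each item either a state or `none` (unassigned).
A realization corresponds to the case where every item is assigned. -/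
abbrev Sub (E O : Type*) := E → Option O

/-- `subext ψ ψ'` means `ψ ⊆ ψ'` as partial assignments of states to items. -/
def subext (ψ ψ' : Sub E O) : Prop := ∀ e o, ψ e = some o → ψ' e = some o

/-- `ssubext ψ ψ'` means `ψ ⊂ ψ'` (strict extension). -/
def ssubext (ψ ψ' : Sub E O) : Prop := subext ψ ψ' ∧ ψ ≠ ψ'

/-- Extend a subrealization `ψ` by assigning state `o` to item `e`. -/
def updateSub [DecidableEq E] (ψ : Sub E O) (e : E) (o : O) : Sub E O :=
  fun e' => if e' = e then some o else ψ e'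

/-- View a (full) realization as a subrealization. -/
def toSub (φ : E → O) : Sub E O := fun e => some (φ e)

variable [Fintype E] [DecidableEq E] [Fintype O] [DecidableEq O]

/-- An instance of the Stochastic Submodular Cover problem: positive item costs `c`,
a probability mass function `p` on realizations with mutually independent item states,
and a utility function `f` on subrealizations which is zero on the empty subrealization,
nonnegative, monotone and submodular (pointwise polymatroid), and equal to the goal
value `Q > 0` on every full realization (coverability). -/
structure Problem (E O : Type*) [Fintype E] [DecidableEq E] [Fintype O] [DecidableEq O] where
  c : E → ℝ
  c_pos : ∀ e, 0 < c e
  p : (E → O) → ℝ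
  p_nonneg : ∀ φ, 0 ≤ p φ
  p_sum : ∑ φ : E → O, p φ = 1
  indep : ∀ φ : E → O, p φ = ∏ e : E, ∑ φ' : E → O, if φ' e = φ e then p φ' else 0
  f : Sub E O → ℝ
  f_nonneg : ∀ ψ, 0 ≤ f ψ
  f_empty : f (fun _ => none) = 0
  f_mono : ∀ ψ ψ' : Sub E O, subext ψ ψ' → f ψ ≤ f ψ'
  f_submod : ∀ (ψ ψ' : Sub E O) (e : E) (o : O), subext ψ ψ' → ψ' e = none →
      f (updateSub ψ' e o) - f ψ' ≤ f (updateSub ψ e o) - f ψ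
  Q : ℝ
  Q_pos : 0 < Q
  f_cover : ∀ φ : E → O, f (toSub φ) = Q

variable (M : Problem E O)

/-- Expectation of a random variable `X` with respect to the random realization `Φ`. -/
def Ex (X : (E → O) → ℝ) : ℝ := ∑ φ : E → O, M.p φ * X φ

/-- Probability of an event `A` of the random realization `Φ`. -/
def Pr (A : (E → O) → Prop) : ℝ := ∑ φ : E → O, if A φ then M.p φ else 0

/-- Conditional expectation `E[X | A]`. -/
def cEx (X : (E → O) → ℝ) (A : (E → O) → Prop) : ℝ :=
  (∑ φ : E → O, if A φ then M.p φ * X φ else 0) / Pr M A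

/-- The random marginal increase in utility `F_ψ(e)` from observing the state of `e`. -/
def Fm (ψ : Sub E O) (e : E) (φ : E → O) : ℝ := M.f (updateSub ψ e (φ e)) - M.f ψ

/-- The unit price `υ(e|ψ) = c(e) / E[F_ψ(e)]`. -/
def price (ψ : Sub E O) (e : E) : ℝ := M.c e / Ex M (Fm M ψ e)

/-- An adaptive covering policy: at every subrealization `ψ` with `f ψ < Q` it selects an
item outside `dom ψ`. -/
def IsPolicy (π : Sub E O → E) : Prop := ∀ ψ : Sub E O, M.f ψ < M.Q → ψ (π ψ) = none

/-- The `α`-approximate adaptive greedy policy: at every `ψ` with `f ψ < Q` the unit price of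
the selected item `σ ψ` is at most `α` times the minimum unit price, i.e.
`υ(σ ψ | ψ) ≤ α · υ(e | ψ)` for every `e ∉ dom ψ`, written multiplicatively so that infinite
unit prices (zero expected marginal utility) are handled correctly. -/
def IsGreedy (α : ℝ) (σ : Sub E O → E) : Prop :=
  IsPolicy M σ ∧
    ∀ ψ : Sub E O, M.f ψ < M.Q → ∀ e : E, ψ e = none →
      M.c (σ ψ) * Ex M (Fm M ψ e) ≤ α * M.c e * Ex M (Fm M ψ (σ ψ))

/-- One step of executing policy `π` on realization `φ`. -/
def stepPol (π : Sub E O → E) (φ : E → O) (ψ : Sub E O) : Sub E O :=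
  if M.f ψ < M.Q then updateSub ψ (π ψ) (φ (π ψ)) else ψ

/-- The subrealization reached after `n` steps of executing `π` on `φ`. -/
def execAux (π : Sub E O → E) (φ : E → O) : ℕ → Sub E O
  | 0 => fun _ => none
  | n + 1 => stepPol M π φ (execAux π φ n)

/-- The cover `Ψ(π)` constructed by executing `π` on realization `φ`. -/
def cover (π : Sub E O → E) (φ : E → O) : Sub E O := execAux M π φ (Fintype.card E)

/-- `ψ` is visited when executing `π` on realization `φ`. -/
def visits (π : Sub E O → E) (φ : E → O) (ψ : Sub E O) : Prop := ∃ n, execAux M π φ n = ψ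

/-- The set `S(π)` of items selected when executing `π` on `φ`. -/
def Ssel (π : Sub E O → E) (φ : E → O) : Finset E :=
  Finset.univ.filter fun e => cover M π φ e ≠ none

/-- The cost `C(π)` incurred when executing `π` on `φ`. -/
def C (π : Sub E O → E) (φ : E → O) : ℝ := ∑ e ∈ Ssel M π φ, M.c e

/-- An adaptive covering policy of minimum expected cost. -/
def IsOptimal (π : Sub E O → E) : Prop :=
  IsPolicy M π ∧ ∀ π' : Sub E O → E, IsPolicy M π' → Ex M (C M π) ≤ Ex M (C M π')

/-- `N(π)`: the non-leaf nodes of the decision tree of `π` — subrealizations with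
`f ψ < Q` that are visited with positive probability. -/
def Nnodes (π : Sub E O → E) : Finset (Sub E O) :=
  Finset.univ.filter fun ψ => M.f ψ < M.Q ∧ 0 < Pr M fun φ => visits M π φ ψ

/-- The event `ψ ↝ i`, for a marker located at utility value `b = f(ρ_i)`:
`ψ` is the last subrealization visited by `σ` (on the given realization) whose
utility is at most `b`. -/
def leadsTo (σ : Sub E O → E) (b : ℝ) (ψ : Sub E O) (φ : E → O) : Prop :=
  visits M σ φ ψ ∧ M.f ψ ≤ b ∧
    ∀ ψ' : Sub E O, visits M σ φ ψ' → M.f ψ' ≤ b → subext ψ' ψ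

/-- The revenue `λ_i = υ_ψ · ε_i` collected by `σ` from the marker located at utility
value `b = f(ρ_i)` with interval length `εi`, where `ψ` is the unique subrealization
with `ψ ↝ i`. -/
def lam (σ : Sub E O → E) (b εi : ℝ) (φ : E → O) : ℝ :=
  ∑ ψ : Sub E O, if leadsTo M σ b ψ φ then price M ψ (σ ψ) * εi else 0

/-- The revenue `μ(e)` collected by the optimal policy `πs` from item `e`
(relative to the greedy policy `σ`, both executed on the same realization). -/
def mu (σ πs : Sub E O → E) (e : E) (φ : E → O) : ℝ :=
  if e ∈ Ssel M πs φ then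
    if e ∈ Ssel M σ φ then
      ∑ ψ : Sub E O,
        if visits M σ φ ψ ∧ M.f ψ < M.Q ∧ σ ψ = e then price M ψ e * Fm M ψ e φ else 0
    else M.c e
  else 0

/-- The total revenue `μ*` collected by the optimal policy. -/
def muStar (σ πs : Sub E O → E) (φ : E → O) : ℝ := ∑ e : E, mu M σ πs e φ

/-- Replay of the internal state of policy `πs` in the second stage of the hybrid policy:
starting from the empty subrealization, repeatedly query `πs`; an item whose state is
already recorded in `ψ'` is not re-selected, its recorded state being used instead. -/
def replayAux (πs : Sub E O → E) (ψ' : Sub E O) : ℕ → Sub E O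
  | 0 => fun _ => none
  | n + 1 =>
    if M.f (replayAux πs ψ' n) < M.Q then
      match ψ' (πs (replayAux πs ψ' n)) with
      | some o => updateSub (replayAux πs ψ' n) (πs (replayAux πs ψ' n)) o
      | none => replayAux πs ψ' n
    else replayAux πs ψ' n

/-- The hybrid policy `π^ψ0`: follow `σ` until `ψ0` is visited, then switch to executing
`πs` from the root of its tree, never re-selecting an item of `dom ψ0` and using the
state recorded in `ψ0` instead. -/
def hybrid (σ πs : Sub E O → E) (ψ0 : Sub E O) : Sub E O → E := fun ψ' =>
  if subext ψ0 ψ' then πs (replayAux M πs ψ' (Fintype.card E)) else σ ψ'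

/-- `δ⁺_ψ0(e)`: the marginal utility obtained by the hybrid policy `π^ψ0` when it selects
`e` during its second stage, and `0` if `e` is not selected in the second stage. -/
def deltaPlus (σ πs : Sub E O → E) (ψ0 : Sub E O) (e : E) (φ : E → O) : ℝ :=
  ∑ ψ' : Sub E O,
    if subext ψ0 ψ' ∧ visits M (hybrid M σ πs ψ0) φ ψ' ∧
        ssubext ψ' (cover M (hybrid M σ πs ψ0) φ) ∧ hybrid M σ πs ψ0 ψ' = e
    then Fm M ψ' e φ else 0


/-! ### Helper lemmas -/

/-- Real-valued indicator of a proposition. -/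
def ind (P : Prop) : ℝ := if P then 1 else 0

lemma ind_nonneg (P : Prop) : 0 ≤ ind P := by
  unfold ind; split_ifs <;> norm_num

/-- Marginal probability of state `o` for item `e`. -/
def marg (e : E) (o : O) : ℝ := ∑ φ' : E → O, if φ' e = o then M.p φ' else 0

lemma marg_sum (e : E) (g : O → ℝ) :
    ∑ o, marg M e o * g o = Ex M (fun φ => g (φ e)) := by
  unfold marg Ex
  simp_rw [Finset.sum_mul]
  rw [Finset.sum_comm]
  refine Finset.sum_congr rfl fun φ _ => ?_
  simp [ite_mul]

lemma p_swap (e : E) (φ : E → O) (o : O) :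
    M.p φ * marg M e o = M.p (Function.update φ e o) * marg M e (φ e) := by
  have h1 : ∀ φ : E → O, M.p φ = marg M e (φ e) * ∏ e' ∈ Finset.univ.erase e, marg M e' (φ e') := by
    intro φ
    rw [M.indep φ]
    exact (Finset.mul_prod_erase Finset.univ (fun e' => marg M e' (φ e')) (Finset.mem_univ e)).symm
  rw [h1 φ, h1 (Function.update φ e o)]
  have h2 : ∏ e' ∈ Finset.univ.erase e, marg M e' (Function.update φ e o e')
      = ∏ e' ∈ Finset.univ.erase e, marg M e' (φ e') := by
    refine Finset.prod_congr rfl fun e' he' => ?_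
    rw [Function.update_of_ne (Finset.ne_of_mem_erase he')]
  rw [h2, Function.update_self]
  ring

/-- Independence of a function not depending on coordinate `e` from `Φ e`. -/
lemma Ex_indep (e : E) (X : (E → O) → ℝ) (hX : ∀ φ o, X (Function.update φ e o) = X φ)
    (g : O → ℝ) :
    Ex M (fun φ => X φ * g (φ e)) = Ex M X * Ex M (fun φ => g (φ e)) := by
  have hone : ∑ o, marg M e o = 1 := by
    have := marg_sum M e (fun _ => 1)
    simpa [Ex, M.p_sum] using this
  let s : (E → O) × O → (E → O) × O := fun x => (Function.update x.1 e x.2, x.1 e)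
  have hs : Function.Involutive s := by
    rintro ⟨φ, o⟩
    simp [s]
  calc Ex M (fun φ => X φ * g (φ e))
      = ∑ φ, ∑ o, M.p φ * marg M e o * (X φ * g (φ e)) := by
        unfold Ex
        refine Finset.sum_congr rfl fun φ _ => ?_
        rw [← Finset.sum_mul, ← Finset.mul_sum, hone, mul_one]
    _ = ∑ x : (E → O) × O, M.p x.1 * marg M e x.2 * (X x.1 * g (x.1 e)) := by
        rw [Fintype.sum_prod_type]
    _ = ∑ x : (E → O) × O, M.p (s x).1 * marg M e (s x).2 * (X (s x).1 * g ((s x).1 e)) :=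
        (Equiv.sum_comp hs.toPerm
          (fun x : (E → O) × O => M.p x.1 * marg M e x.2 * (X x.1 * g (x.1 e)))).symm
    _ = ∑ x : (E → O) × O, M.p x.1 * marg M e x.2 * (X x.1 * g x.2) := by
        refine Finset.sum_congr rfl fun x _ => ?_
        simp only [s]
        rw [← p_swap, hX, Function.update_self]
    _ = ∑ φ, ∑ o, M.p φ * marg M e o * (X φ * g o) := by
        rw [Fintype.sum_prod_type]
    _ = Ex M X * ∑ o, marg M e o * g o := by
        unfold Ex
        rw [Finset.sum_mul]
        refine Finset.sum_congr rfl fun φ _ => ?_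
        rw [Finset.mul_sum]
        refine Finset.sum_congr rfl fun o _ => ?_
        ring
    _ = _ := by rw [marg_sum]

lemma Ex_mono (X Y : (E → O) → ℝ) (h : ∀ φ, 0 < M.p φ → X φ ≤ Y φ) : Ex M X ≤ Ex M Y := by
  unfold Ex
  refine Finset.sum_le_sum fun φ _ => ?_
  rcases (M.p_nonneg φ).eq_or_lt with h0 | h0
  · simp [← h0]
  · exact mul_le_mul_of_nonneg_left (h φ h0) h0.le

lemma Ex_sum {ι : Type*} (s : Finset ι) (X : ι → (E → O) → ℝ) :
    Ex M (fun φ => ∑ i ∈ s, X i φ) = ∑ i ∈ s, Ex M (X i) := by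
  unfold Ex
  simp_rw [Finset.mul_sum]
  rw [Finset.sum_comm]

lemma Ex_mul (a : ℝ) (X : (E → O) → ℝ) : Ex M (fun φ => a * X φ) = a * Ex M X := by
  unfold Ex
  rw [Finset.mul_sum]
  exact Finset.sum_congr rfl fun φ _ => by ring

lemma Ex_add (X Y : (E → O) → ℝ) : Ex M (fun φ => X φ + Y φ) = Ex M X + Ex M Y := by
  unfold Ex
  rw [← Finset.sum_add_distrib]
  exact Finset.sum_congr rfl fun φ _ => by ring

lemma Ex_const (a : ℝ) : Ex M (fun _ => a) = a := by
  unfold Ex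
  rw [← Finset.sum_mul, M.p_sum, one_mul]

lemma Ex_nonneg (X : (E → O) → ℝ) (h : ∀ φ, 0 ≤ X φ) : 0 ≤ Ex M X :=
  Finset.sum_nonneg fun φ _ => mul_nonneg (M.p_nonneg φ) (h φ)

lemma subext_update (ψ : Sub E O) (e : E) (o : O) (h : ψ e = none ∨ ψ e = some o) :
    subext ψ (updateSub ψ e o) := by
  intro e' o' h'
  unfold updateSub
  split_ifs with h2
  · subst h2
    rcases h with h | h <;> simp_all
  · exact h'

lemma Fm_nonneg (ψ : Sub E O) (e : E) (h : ψ e = none) (φ : E → O) : 0 ≤ Fm M ψ e φ :=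
  sub_nonneg.2 (M.f_mono _ _ (subext_update ψ e _ (Or.inl h)))

/-- Overwrite `ψ` by `φ` on `S`. -/
def merge (ψ : Sub E O) (φ : E → O) (S : Finset E) : Sub E O :=
  fun e => if e ∈ S then some (φ e) else ψ e

lemma merge_le (ψ : Sub E O) (φ : E → O) (h : subext ψ (toSub φ)) (S : Finset E) :
    M.f (merge ψ φ S) ≤ M.f ψ + ∑ e ∈ S, if ψ e = none then Fm M ψ e φ else 0 := by
  induction S using Finset.induction_on with
  | empty =>
    have h0 : merge ψ φ ∅ = ψ := by funext e; simp [merge]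
    simp [h0]
  | insert e S he ih =>
    rw [Finset.sum_insert he]
    by_cases hn : ψ e = none
    · have h1 : merge ψ φ (insert e S) = updateSub (merge ψ φ S) e (φ e) := by
        funext e'
        by_cases h2 : e' = e
        · subst h2; simp [merge, updateSub]
        · simp [merge, updateSub, h2]
      have h2 : subext ψ (merge ψ φ S) := by
        intro e' o' h'
        have := h e' o' h'
        unfold merge
        split_ifs
        · exact this
        · exact h'
      have h3 := M.f_submod ψ (merge ψ φ S) e (φ e) h2 (by simp [merge, he, hn])
      rw [h1, if_pos hn]
      unfold Fm
      unfold Fm at ih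
      linarith
    · have h1 : merge ψ φ (insert e S) = merge ψ φ S := by
        funext e'
        by_cases h2 : e' = e
        · subst h2
          obtain ⟨o, ho⟩ := Option.ne_none_iff_exists'.1 hn
          have := h _ _ ho
          simp only [toSub] at this
          simp [merge, he, ho, ← this]
        · simp [merge, h2]
      rw [h1, if_neg hn]
      linarith

/-- Some unassigned item has positive expected marginal. -/
lemma exists_pos (ψ : Sub E O) (h : M.f ψ < M.Q) : ∃ e, ψ e = none ∧ 0 < Ex M (Fm M ψ e) := by
  by_contra hcon
  push Not at hcon
  obtain ⟨φ0, hφ0⟩ : ∃ φ, 0 < M.p φ := by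
    by_contra hc
    push Not at hc
    have : ∑ φ, M.p φ ≤ 0 := Finset.sum_nonpos fun φ _ => hc φ
    rw [M.p_sum] at this
    linarith
  have hz : ∀ e, ψ e = none → Fm M ψ e φ0 = 0 := by
    intro e he
    have h1 : Ex M (Fm M ψ e) = 0 :=
      le_antisymm (hcon e he) (Ex_nonneg M _ (Fm_nonneg M ψ e he))
    unfold Ex at h1
    rw [Finset.sum_eq_zero_iff_of_nonneg
      (fun φ _ => mul_nonneg (M.p_nonneg φ) (Fm_nonneg M ψ e he φ))] at h1
    have := h1 φ0 (Finset.mem_univ _)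
    rcases mul_eq_zero.1 this with h2 | h2
    · exact absurd h2 hφ0.ne'
    · exact h2
  let φ1 : E → O := fun e => (ψ e).getD (φ0 e)
  have hs : subext ψ (toSub φ1) := by
    intro e o ho
    simp [toSub, φ1, ho]
  have h1 := merge_le M ψ φ1 hs Finset.univ
  have h2 : merge ψ φ1 Finset.univ = toSub φ1 := by
    funext e; simp [merge, toSub]
  rw [h2, M.f_cover] at h1
  have h3 : ∑ e, (if ψ e = none then Fm M ψ e φ1 else 0) = 0 := by
    refine Finset.sum_eq_zero fun e _ => ?_
    split_ifs with he
    · have := hz e he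
      simpa [Fm, φ1, he] using this
    · rfl
  linarith

lemma greedy_pos {α : ℝ} (hα : 1 ≤ α) {σ : Sub E O → E} (hσ : IsGreedy M α σ)
    (ψ : Sub E O) (h : M.f ψ < M.Q) : 0 < Ex M (Fm M ψ (σ ψ)) := by
  obtain ⟨e, he, hp⟩ := exists_pos M ψ h
  have h1 := hσ.2 ψ h e he
  have h2 : 0 < M.c (σ ψ) * Ex M (Fm M ψ e) := mul_pos (M.c_pos _) hp
  have h3 : 0 < α * M.c e := mul_pos (by linarith) (M.c_pos e)
  by_contra hc
  push Not at hc
  have := mul_nonpos_of_nonneg_of_nonpos h3.le hc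
  linarith

/-! Execution lemmas -/

lemma exec_succ (π : Sub E O → E) (φ : E → O) (n : ℕ) :
    execAux M π φ (n + 1) = stepPol M π φ (execAux M π φ n) := rfl

lemma exec_sub_real (π : Sub E O → E) (φ : E → O) (n : ℕ) :
    subext (execAux M π φ n) (toSub φ) := by
  induction n with
  | zero => intro e o h; simp [execAux] at h
  | succ n ih =>
    intro e o h
    rw [exec_succ] at h
    unfold stepPol at h
    split_ifs at h
    · unfold updateSub at h
      split_ifs at h with h2
      · subst h2; exact h
      · exact ih e o h
    · exact ih e o h

lemma exec_step_sub (π : Sub E O → E) (φ : E → O) (n : ℕ) :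
    subext (execAux M π φ n) (execAux M π φ (n + 1)) := by
  rw [exec_succ]
  unfold stepPol
  split_ifs
  · apply subext_update
    rcases h : execAux M π φ n (π (execAux M π φ n)) with _ | o
    · exact Or.inl rfl
    · right
      rw [← exec_sub_real M π φ n _ _ h]
      rfl
  · exact fun e o h => h

lemma exec_sub (π : Sub E O → E) (φ : E → O) {n m : ℕ} (h : n ≤ m) :
    subext (execAux M π φ n) (execAux M π φ m) := by
  induction m, h using Nat.le_induction with
  | base => exact fun e o h => h
  | succ m _ ih => exact fun e o h => exec_step_sub M π φ m e o (ih e o h)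

lemma subext_none {ψ ψ' : Sub E O} (h : subext ψ ψ') {e : E} (he : ψ' e = none) : ψ e = none := by
  rcases h1 : ψ e with _ | o
  · rfl
  · have := h e o h1
    simp_all

lemma exec_indep (π : Sub E O → E) (φ : E → O) (e : E) (o : O) (n : ℕ)
    (h : execAux M π φ n e = none) :
    execAux M π (Function.update φ e o) n = execAux M π φ n := by
  induction n with
  | zero => rfl
  | succ n ih =>
    have h0 := subext_none (exec_step_sub M π φ n) h
    rw [exec_succ, exec_succ, ih h0]
    rw [exec_succ] at h
    unfold stepPol at h ⊢
    split_ifs with hf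
    · rw [if_pos hf] at h
      have hne : π (execAux M π φ n) ≠ e := by
        rintro rfl
        simp [updateSub] at h
      rw [Function.update_of_ne hne]
    · rfl

lemma visits_indep (π : Sub E O → E) (φ : E → O) (e : E) (o : O) (ψ : Sub E O)
    (h : ψ e = none) : visits M π (Function.update φ e o) ψ ↔ visits M π φ ψ := by
  constructor
  · rintro ⟨n, hn⟩
    refine ⟨n, ?_⟩
    have := exec_indep M π (Function.update φ e o) e (φ e) n (by rw [hn]; exact h)
    rw [Function.update_idem, Function.update_eq_self] at this
    rw [this, hn]
  · rintro ⟨n, hn⟩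
    exact ⟨n, by rw [exec_indep M π φ e o n (by rw [hn]; exact h), hn]⟩

lemma mem_Ssel (π : Sub E O → E) (φ : E → O) (e : E) :
    e ∈ Ssel M π φ ↔ cover M π φ e ≠ none := by
  simp [Ssel]

lemma Ssel_indep (π : Sub E O → E) (φ : E → O) (e : E) (o : O) :
    e ∈ Ssel M π (Function.update φ e o) ↔ e ∈ Ssel M π φ := by
  rw [mem_Ssel, mem_Ssel, not_iff_not]
  unfold cover
  constructor
  · intro h
    have := exec_indep M π (Function.update φ e o) e (φ e) _ h
    rw [Function.update_idem, Function.update_eq_self] at this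
    rw [this, h]
  · intro h
    rw [exec_indep M π φ e o _ h, h]

lemma exec_card (π : Sub E O → E) (hπ : IsPolicy M π) (φ : E → O) (n : ℕ) :
    M.Q ≤ M.f (execAux M π φ n) ∨
      n ≤ (Finset.univ.filter fun e => execAux M π φ n e ≠ none).card := by
  induction n with
  | zero => right; simp
  | succ n ih =>
    by_cases hf : M.f (execAux M π φ n) < M.Q
    · right
      have h1 := ih.resolve_left (not_le.2 hf)
      refine lt_of_le_of_lt h1 (Finset.card_lt_card ?_)
      rw [Finset.ssubset_iff_of_subset]
      · refine ⟨π (execAux M π φ n), ?_, ?_⟩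
        · simp [exec_succ, stepPol, hf, updateSub]
        · simp [hπ _ hf]
      · intro e he
        simp only [Finset.mem_filter, Finset.mem_univ, true_and] at he ⊢
        exact fun h => he (subext_none (exec_step_sub M π φ n) h)
    · left
      rw [exec_succ]
      unfold stepPol
      rw [if_neg hf]
      exact not_lt.1 hf

lemma cover_ge (π : Sub E O → E) (hπ : IsPolicy M π) (φ : E → O) :
    M.Q ≤ M.f (cover M π φ) := by
  rcases exec_card M π hπ φ (Fintype.card E) with h | h
  · exact h
  · have h1 : (Finset.univ.filter fun e => execAux M π φ (Fintype.card E) e ≠ none)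
        = Finset.univ :=
      Finset.eq_univ_of_card _ (le_antisymm (Finset.card_le_univ _) h)
    have h2 : cover M π φ = toSub φ := by
      funext e
      have he : e ∈ Finset.univ.filter fun e => execAux M π φ (Fintype.card E) e ≠ none := by
        rw [h1]; exact Finset.mem_univ e
      simp only [Finset.mem_filter, Finset.mem_univ, true_and] at he
      obtain ⟨o, ho⟩ := Option.ne_none_iff_exists'.1 he
      unfold cover
      rw [ho, exec_sub_real M π φ _ e o ho]
    rw [h2, M.f_cover]

lemma gap_le (π : Sub E O → E) (hπ : IsPolicy M π) (φ : E → O) (ψ : Sub E O)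
    (h : subext ψ (toSub φ)) :
    M.Q - M.f ψ ≤ ∑ e, if ψ e = none then ind (e ∈ Ssel M π φ) * Fm M ψ e φ else 0 := by
  have h1 := merge_le M ψ φ h (Ssel M π φ)
  have h2 : subext (cover M π φ) (merge ψ φ (Ssel M π φ)) := by
    intro e o ho
    have he : e ∈ Ssel M π φ := by rw [mem_Ssel, ho]; simp
    have := exec_sub_real M π φ _ e o ho
    simp only [toSub] at this
    simp only [merge, he, if_true]
    exact this
  have h3 := M.f_mono _ _ h2
  have h4 := cover_ge M π hπ φ
  have h5 : ∑ e, (if ψ e = none then ind (e ∈ Ssel M π φ) * Fm M ψ e φ else 0)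
      = ∑ e ∈ Ssel M π φ, if ψ e = none then Fm M ψ e φ else 0 := by
    rw [← Finset.sum_subset (Finset.subset_univ (Ssel M π φ))]
    · refine Finset.sum_congr rfl fun e he => ?_
      simp [ind, he]
    · intro e _ he
      simp [ind, he]
  rw [h5]
  linarith

lemma sel_of_exec (π : Sub E O → E) (φ : E → O) (n : ℕ) (e : E)
    (h : execAux M π φ n e ≠ none) :
    ∃ ψ, visits M π φ ψ ∧ M.f ψ < M.Q ∧ π ψ = e := by
  induction n with
  | zero => simp [execAux] at h
  | succ n ih =>
    rw [exec_succ] at h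
    unfold stepPol at h
    split_ifs at h with hf
    · by_cases he : e = π (execAux M π φ n)
      · exact ⟨_, ⟨n, rfl⟩, hf, he.symm⟩
      · apply ih
        simpa [updateSub, he] using h
    · exact ih h

lemma C_le (π : Sub E O → E) (φ : E → O) :
    C M π φ ≤ ∑ ψ, if M.f ψ < M.Q then ind (visits M π φ ψ) * M.c (π ψ) else 0 := by
  have h1 : Ssel M π φ ⊆
      (Finset.univ.filter fun ψ => visits M π φ ψ ∧ M.f ψ < M.Q).image π := by
    intro e he
    rw [mem_Ssel] at he
    obtain ⟨ψ, hv, hf, rfl⟩ := sel_of_exec M π φ _ e he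
    exact Finset.mem_image.2 ⟨ψ, by simp [hv, hf], rfl⟩
  unfold C
  calc ∑ e ∈ Ssel M π φ, M.c e
      ≤ ∑ e ∈ (Finset.univ.filter fun ψ => visits M π φ ψ ∧ M.f ψ < M.Q).image π, M.c e :=
        Finset.sum_le_sum_of_subset_of_nonneg h1 fun e _ _ => (M.c_pos e).le
    _ ≤ ∑ ψ ∈ Finset.univ.filter fun ψ => visits M π φ ψ ∧ M.f ψ < M.Q, M.c (π ψ) :=
        Finset.sum_image_le_of_nonneg fun e _ => (M.c_pos _).le
    _ = _ := by
        rw [Finset.sum_filter]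
        refine Finset.sum_congr rfl fun ψ _ => ?_
        by_cases hv : visits M π φ ψ <;> by_cases hf : M.f ψ < M.Q <;> simp [ind, hv, hf]

/-- `ψ` is the last node of utility at most `b`. -/
def lastAt (σ : Sub E O → E) (b : ℝ) (ψ : Sub E O) (φ : E → O) : Prop :=
  visits M σ φ ψ ∧ M.f ψ ≤ b ∧ b < M.f (updateSub ψ (σ ψ) (φ (σ ψ)))

/-- `σ` selects `e` at the node `ψ` of utility at most `b`. -/
def selAt (σ : Sub E O → E) (b : ℝ) (e : E) (ψ : Sub E O) (φ : E → O) : Prop :=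
  visits M σ φ ψ ∧ M.f ψ ≤ b ∧ σ ψ = e

lemma lastAt_ge (σ : Sub E O → E) {b : ℝ} (hb : b < M.Q) {ψ : Sub E O} {φ : E → O} {n m : ℕ}
    (h : lastAt M σ b ψ φ) (hn : execAux M σ φ n = ψ) (hm : M.f (execAux M σ φ m) ≤ b) :
    m ≤ n := by
  by_contra hc
  push Not at hc
  have h1 := M.f_mono _ _ (exec_sub M σ φ (show n + 1 ≤ m from hc))
  have h2 : execAux M σ φ (n + 1) = updateSub ψ (σ ψ) (φ (σ ψ)) := by
    rw [exec_succ, hn]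
    unfold stepPol
    rw [if_pos (lt_of_le_of_lt h.2.1 hb)]
  rw [h2] at h1
  have := h.2.2
  linarith

lemma lastAt_unique (σ : Sub E O → E) {b : ℝ} (hb : b < M.Q) {ψ ψ' : Sub E O} {φ : E → O}
    (h : lastAt M σ b ψ φ) (h' : lastAt M σ b ψ' φ) : ψ' = ψ := by
  obtain ⟨n, hn⟩ := h.1
  obtain ⟨m, hm⟩ := h'.1
  have h1 := lastAt_ge M σ hb h hn (by rw [hm]; exact h'.2.1)
  have h2 := lastAt_ge M σ hb h' hm (by rw [hn]; exact h.2.1)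
  have : n = m := le_antisymm h2 h1
  rw [← hn, ← hm, this]

lemma selAt_assigned (σ : Sub E O → E) {b : ℝ} (hb : b < M.Q) {e : E} {φ : E → O} {n m : ℕ}
    (h : selAt M σ b e (execAux M σ φ n) φ) (hnm : n < m) : execAux M σ φ m e ≠ none := by
  intro hc
  have h1 := subext_none (exec_sub M σ φ (show n + 1 ≤ m from hnm)) hc
  rw [exec_succ] at h1
  unfold stepPol at h1
  rw [if_pos (lt_of_le_of_lt h.2.1 hb), h.2.2] at h1
  simp [updateSub] at h1

lemma selAt_unique (σ : Sub E O → E) (hσ : IsPolicy M σ) {b : ℝ} (hb : b < M.Q) {e : E}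
    {ψ ψ' : Sub E O} {φ : E → O}
    (h : selAt M σ b e ψ φ) (h' : selAt M σ b e ψ' φ) : ψ' = ψ := by
  have hn0 := hσ _ (lt_of_le_of_lt h.2.1 hb)
  have hm0 := hσ _ (lt_of_le_of_lt h'.2.1 hb)
  rw [h.2.2] at hn0
  rw [h'.2.2] at hm0
  obtain ⟨n, rfl⟩ := h.1
  obtain ⟨m, rfl⟩ := h'.1
  rcases lt_trichotomy n m with hl | hl | hl
  · exact absurd hm0 (selAt_assigned M σ hb h hl)
  · rw [hl]
  · exact absurd hn0 (selAt_assigned M σ hb h' hl)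

/-- Pointwise bound on the revenue from item `e`. -/
lemma revenue_le (σ : Sub E O → E) (hσ : IsPolicy M σ) {b : ℝ} (hb : b < M.Q) (e : E)
    (φ : E → O) (hpr : ∀ ψ, M.f ψ < M.Q → 0 ≤ price M ψ (σ ψ)) :
    (∑ ψ, if ψ e = none then ind (lastAt M σ b ψ φ) *
        (if σ ψ = e then price M ψ e * Fm M ψ e φ else M.c e) else 0)
      ≤ M.c e + ∑ ψ, ind (selAt M σ b e ψ φ) * (price M ψ e * Fm M ψ e φ - M.c e) := by
  have hL : ∀ ψ, lastAt M σ b ψ φ →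
      (∑ ψ, if ψ e = none then ind (lastAt M σ b ψ φ) *
        (if σ ψ = e then price M ψ e * Fm M ψ e φ else M.c e) else 0)
      = if ψ e = none then (if σ ψ = e then price M ψ e * Fm M ψ e φ else M.c e) else 0 := by
    intro ψ hψ
    rw [Finset.sum_eq_single ψ]
    · simp [ind, hψ]
    · intro ψ' _ hne
      have : ¬ lastAt M σ b ψ' φ := fun h => hne (lastAt_unique M σ hb hψ h)
      simp [ind, this]
    · simp
  have hL0 : (∀ ψ, ¬ lastAt M σ b ψ φ) →
      (∑ ψ, if ψ e = none then ind (lastAt M σ b ψ φ) *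
        (if σ ψ = e then price M ψ e * Fm M ψ e φ else M.c e) else 0) = 0 := by
    intro h
    refine Finset.sum_eq_zero fun ψ _ => ?_
    simp [ind, h ψ]
  by_cases hS : ∃ ψ0, selAt M σ b e ψ0 φ
  · obtain ⟨ψ0, h0⟩ := hS
    have hR : M.c e + ∑ ψ, ind (selAt M σ b e ψ φ) * (price M ψ e * Fm M ψ e φ - M.c e)
        = price M ψ0 e * Fm M ψ0 e φ := by
      rw [Finset.sum_eq_single ψ0]
      · simp [ind, h0]
      · intro ψ' _ hne
        have : ¬ selAt M σ b e ψ' φ := fun h => hne (selAt_unique M σ hσ hb h0 h)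
        simp [ind, this]
      · simp
    have hf0 : M.f ψ0 < M.Q := lt_of_le_of_lt h0.2.1 hb
    have hR0 : 0 ≤ price M ψ0 e * Fm M ψ0 e φ := by
      have h1 := hpr ψ0 hf0
      have h2 := hσ ψ0 hf0
      rw [h0.2.2] at h1 h2
      exact mul_nonneg h1 (Fm_nonneg M ψ0 e h2 φ)
    rw [hR]
    by_cases hA : ∃ ψ, lastAt M σ b ψ φ
    · obtain ⟨ψ, hψ⟩ := hA
      rw [hL ψ hψ]
      by_cases heq : ψ = ψ0
      · subst heq
        rw [if_pos h0.2.2]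
        split_ifs
        · exact le_rfl
        · exact hR0
      · have : ψ e ≠ none := by
          obtain ⟨n, hn⟩ := hψ.1
          obtain ⟨m, hm⟩ := h0.1
          have hmn := lastAt_ge M σ hb hψ hn (by rw [hm]; exact h0.2.1)
          have hlt : m < n := by
            refine lt_of_le_of_ne hmn ?_
            rintro rfl
            exact heq (hn.symm.trans hm)
          rw [← hn]
          exact selAt_assigned M σ hb (by rw [hm]; exact h0) hlt
        rw [if_neg this]
        exact hR0
    · push Not at hA
      rw [hL0 hA]
      exact hR0
  · push Not at hS
    have hR : M.c e + ∑ ψ, ind (selAt M σ b e ψ φ) * (price M ψ e * Fm M ψ e φ - M.c e)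
        = M.c e := by
      rw [Finset.sum_eq_zero, add_zero]
      intro ψ _
      simp [ind, hS ψ]
    rw [hR]
    by_cases hA : ∃ ψ, lastAt M σ b ψ φ
    · obtain ⟨ψ, hψ⟩ := hA
      rw [hL ψ hψ]
      have hne : σ ψ ≠ e := fun h => hS ψ ⟨hψ.1, hψ.2.1, h⟩
      rw [if_neg hne]
      split_ifs
      · exact le_rfl
      · exact (M.c_pos e).le
    · push Not at hA
      rw [hL0 hA]
      exact (M.c_pos e).le

lemma ind_congr {P R : Prop} (h : P ↔ R) : ind P = ind R := by
  rw [propext h]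

/-- The expected revenue from item `e` is at most its expected cost in `πs`. -/
lemma expected_revenue_le {α : ℝ} (hα : 1 ≤ α) (σ πs : Sub E O → E) (hσ : IsGreedy M α σ)
    {b : ℝ} (hb : b < M.Q) (e : E) :
    Ex M (fun φ => ∑ ψ, if ψ e = none then ind (e ∈ Ssel M πs φ) * ind (lastAt M σ b ψ φ) *
        (if σ ψ = e then price M ψ e * Fm M ψ e φ else M.c e) else 0)
      ≤ Ex M (fun φ => ind (e ∈ Ssel M πs φ) * M.c e) := by
  have hpr : ∀ ψ, M.f ψ < M.Q → 0 ≤ price M ψ (σ ψ) := fun ψ h =>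
    div_nonneg (M.c_pos _).le (greedy_pos M hα hσ ψ h).le
  calc _ ≤ Ex M (fun φ => ind (e ∈ Ssel M πs φ) * M.c e +
          ∑ ψ, (ind (e ∈ Ssel M πs φ) * ind (selAt M σ b e ψ φ)) *
            (price M ψ e * Fm M ψ e φ - M.c e)) := by
        refine Ex_mono M _ _ fun φ _ => ?_
        have h := mul_le_mul_of_nonneg_left (revenue_le M σ hσ.1 hb e φ hpr)
          (ind_nonneg (e ∈ Ssel M πs φ))
        rw [mul_add, Finset.mul_sum, Finset.mul_sum] at h
        refine le_trans (le_of_eq ?_) (h.trans (le_of_eq ?_))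
        · refine Finset.sum_congr rfl fun ψ _ => ?_
          by_cases he : ψ e = none
          · simp only [he, if_true]; ring
          · simp [he]
        · congr 1
          exact Finset.sum_congr rfl fun ψ _ => by ring
    _ = Ex M (fun φ => ind (e ∈ Ssel M πs φ) * M.c e) + 0 := by
        rw [Ex_add, Ex_sum]
        congr 1
        refine Finset.sum_eq_zero fun ψ _ => ?_
        by_cases hψ : M.f ψ ≤ b ∧ σ ψ = e
        · have hf : M.f ψ < M.Q := lt_of_le_of_lt hψ.1 hb
          have hn := hσ.1 ψ hf
          rw [hψ.2] at hn
          have hpos := greedy_pos M hα hσ ψ hf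
          rw [hψ.2] at hpos
          have h1 := Ex_indep M e (fun φ => ind (e ∈ Ssel M πs φ) * ind (selAt M σ b e ψ φ))
            (by
              intro φ o
              rw [ind_congr (Ssel_indep M πs φ e o)]
              congr 1
              apply ind_congr
              unfold selAt
              rw [visits_indep M σ φ e o ψ hn])
            (fun o => price M ψ e * (M.f (updateSub ψ e o) - M.f ψ) - M.c e)
          have h2 : Ex M (fun φ => price M ψ e * (M.f (updateSub ψ e (φ e)) - M.f ψ) - M.c e)
              = 0 := by
            have h3 : Ex M (fun φ => price M ψ e * (M.f (updateSub ψ e (φ e)) - M.f ψ) - M.c e)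
              = price M ψ e * Ex M (Fm M ψ e) + -M.c e := by
              rw [← Ex_mul, ← Ex_const M (-M.c e), ← Ex_add]
              rfl
            rw [h3]
            unfold price
            rw [div_mul_cancel₀ _ hpos.ne']
            ring
          rw [h2, mul_zero] at h1
          exact h1
        · have : ∀ φ, ¬ selAt M σ b e ψ φ := fun φ h => hψ h.2
          simp [ind, this, Ex]
    _ = _ := add_zero _

lemma Ex_C (π : Sub E O → E) :
    Ex M (C M π) = ∑ e, Ex M (fun φ => ind (e ∈ Ssel M π φ) * M.c e) := by
  rw [← Ex_sum]
  congr 1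
  funext φ
  unfold C
  rw [← Finset.sum_subset (Finset.subset_univ (Ssel M π φ))]
  · refine Finset.sum_congr rfl fun e he => ?_
    simp [ind, he]
  · intro e _ he
    simp [ind, he]

/-- The main estimate: for each level `b`. -/
lemma level_bound {α : ℝ} (hα : 1 ≤ α) (σ πs : Sub E O → E) (hσ : IsGreedy M α σ)
    (hπs : IsPolicy M πs) {b : ℝ} (hb : b < M.Q) :
    (M.Q - b) * ∑ ψ, price M ψ (σ ψ) * Ex M (fun φ => ind (lastAt M σ b ψ φ))
      ≤ α * Ex M (C M πs) := by
  have hα0 : 0 ≤ α := by linarith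
  have key : ∀ ψ, (M.Q - b) * (price M ψ (σ ψ) * Ex M (fun φ => ind (lastAt M σ b ψ φ)))
      ≤ α * ∑ e, Ex M (fun φ => if ψ e = none then
          ind (e ∈ Ssel M πs φ) * ind (lastAt M σ b ψ φ) *
            (if σ ψ = e then price M ψ e * Fm M ψ e φ else M.c e) else 0) := by
    intro ψ
    by_cases hψ : M.f ψ ≤ b
    swap
    · have : ∀ φ, ¬ lastAt M σ b ψ φ := fun φ h => hψ h.2.1
      simp [ind, this, Ex]
    have hf : M.f ψ < M.Q := lt_of_le_of_lt hψ hb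
    have hpos := greedy_pos M hα hσ ψ hf
    have hpr : 0 ≤ price M ψ (σ ψ) := div_nonneg (M.c_pos _).le hpos.le
    calc (M.Q - b) * (price M ψ (σ ψ) * Ex M (fun φ => ind (lastAt M σ b ψ φ)))
        = price M ψ (σ ψ) * Ex M (fun φ => (M.Q - b) * ind (lastAt M σ b ψ φ)) := by
          rw [Ex_mul]; ring
      _ ≤ price M ψ (σ ψ) * Ex M (fun φ => ∑ e, if ψ e = none then
            ind (e ∈ Ssel M πs φ) * ind (lastAt M σ b ψ φ) * Fm M ψ e φ else 0) := by
          refine mul_le_mul_of_nonneg_left (Ex_mono M _ _ fun φ _ => ?_) hpr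
          by_cases hA : lastAt M σ b ψ φ
          · obtain ⟨n, hn⟩ := hA.1
            have hs : subext ψ (toSub φ) := by
              rw [← hn]; exact exec_sub_real M σ φ n
            have h1 := gap_le M πs hπs φ ψ hs
            simp only [ind, hA, if_true, mul_one] at h1 ⊢
            linarith
          · simp [ind, hA]
      _ = ∑ e, price M ψ (σ ψ) * Ex M (fun φ => if ψ e = none then
            ind (e ∈ Ssel M πs φ) * ind (lastAt M σ b ψ φ) * Fm M ψ e φ else 0) := by
          rw [Ex_sum, Finset.mul_sum]
      _ ≤ ∑ e, α * Ex M (fun φ => if ψ e = none then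
          ind (e ∈ Ssel M πs φ) * ind (lastAt M σ b ψ φ) *
            (if σ ψ = e then price M ψ e * Fm M ψ e φ else M.c e) else 0) := by
          refine Finset.sum_le_sum fun e _ => ?_
          by_cases he : ψ e = none
          swap
          · simp [he, Ex]
          simp only [he, if_true]
          by_cases hse : σ ψ = e
          · simp only [hse, if_true]
            rw [hse] at hpr
            rw [← Ex_mul]
            have h0 : 0 ≤ Ex M (fun φ => ind (e ∈ Ssel M πs φ) * ind (lastAt M σ b ψ φ) *
                (price M ψ e * Fm M ψ e φ)) :=
              Ex_nonneg M _ fun φ => mul_nonneg (mul_nonneg (ind_nonneg _) (ind_nonneg _))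
                (mul_nonneg hpr (Fm_nonneg M ψ e he φ))
            have h1 : (fun φ => price M ψ e *
                (ind (e ∈ Ssel M πs φ) * ind (lastAt M σ b ψ φ) * Fm M ψ e φ))
              = fun φ => ind (e ∈ Ssel M πs φ) * ind (lastAt M σ b ψ φ) *
                (price M ψ e * Fm M ψ e φ) := by
              funext φ; ring
            rw [h1]
            nlinarith
          · simp only [hse, if_false]
            have h1 := Ex_indep M e
              (fun φ => ind (e ∈ Ssel M πs φ) * ind (lastAt M σ b ψ φ))
              (by
                intro φ o
                rw [ind_congr (Ssel_indep M πs φ e o)]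
                congr 1
                apply ind_congr
                unfold lastAt
                rw [visits_indep M σ φ e o ψ he, Function.update_of_ne hse])
              (fun o => M.f (updateSub ψ e o) - M.f ψ)
            have h2 : Ex M (fun φ => ind (e ∈ Ssel M πs φ) * ind (lastAt M σ b ψ φ) *
                Fm M ψ e φ) = Ex M (fun φ => ind (e ∈ Ssel M πs φ) * ind (lastAt M σ b ψ φ)) *
                Ex M (Fm M ψ e) := h1
            have h3 : Ex M (fun φ => ind (e ∈ Ssel M πs φ) * ind (lastAt M σ b ψ φ) * M.c e)
                = M.c e * Ex M (fun φ => ind (e ∈ Ssel M πs φ) * ind (lastAt M σ b ψ φ)) := by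
              rw [← Ex_mul]
              congr 1
              funext φ; ring
            rw [h2, h3]
            have h4 : price M ψ (σ ψ) * Ex M (Fm M ψ e) ≤ α * M.c e := by
              unfold price
              rw [div_mul_eq_mul_div, div_le_iff₀ hpos]
              exact hσ.2 ψ hf e he
            have h5 : 0 ≤ Ex M (fun φ => ind (e ∈ Ssel M πs φ) * ind (lastAt M σ b ψ φ)) :=
              Ex_nonneg M _ fun φ => mul_nonneg (ind_nonneg _) (ind_nonneg _)
            have h6 := mul_le_mul_of_nonneg_right h4 h5
            linarith
      _ = _ := by rw [Finset.mul_sum]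
  rw [Finset.mul_sum]
  refine (Finset.sum_le_sum fun ψ _ => key ψ).trans ?_
  rw [← Finset.mul_sum, Finset.sum_comm, Ex_C]
  refine mul_le_mul_of_nonneg_left (Finset.sum_le_sum fun e _ => ?_) hα0
  rw [← Ex_sum]
  exact expected_revenue_le M hα σ πs hσ hb e

/-- Splitting an interval along a monotone sequence. -/
lemma split_le (t : ℕ) (g ε : ℕ → ℝ) (hg : ∀ i j, 1 ≤ i → i ≤ j → j ≤ t + 1 → g i ≤ g j)
    (hε : ∀ i, 1 ≤ i → i ≤ t → ε i = g (i + 1) - g i) (j k : ℕ) (hj : 1 ≤ j) (hjt : j ≤ t + 1)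
    (hk : 1 ≤ k) (hkt : k ≤ t + 1) :
    g k - g j ≤ ∑ i ∈ Finset.Icc 1 t, ind (g j ≤ g i ∧ g i < g k) * ε i := by
  have hε0 : ∀ i ∈ Finset.Icc 1 t, 0 ≤ ε i := by
    intro i hi
    rw [Finset.mem_Icc] at hi
    rw [hε i hi.1 hi.2]
    have := hg i (i + 1) hi.1 (by omega) (by omega)
    linarith
  rcases le_total k j with h | h
  · have h1 := hg k j hk h hjt
    have h2 : 0 ≤ ∑ i ∈ Finset.Icc 1 t, ind (g j ≤ g i ∧ g i < g k) * ε i :=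
      Finset.sum_nonneg fun i hi => mul_nonneg (ind_nonneg _) (hε0 i hi)
    linarith
  · have hsub : Finset.Ico j k ⊆ Finset.Icc 1 t := by
      intro i hi
      rw [Finset.mem_Ico] at hi
      rw [Finset.mem_Icc]
      omega
    calc g k - g j = ∑ i ∈ Finset.Ico j k, (g (i + 1) - g i) := (Finset.sum_Ico_sub g h).symm
      _ ≤ ∑ i ∈ Finset.Ico j k, ind (g j ≤ g i ∧ g i < g k) * ε i := by
          refine Finset.sum_le_sum fun i hi => ?_
          have hi' := hsub hi
          rw [Finset.mem_Ico] at hi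
          have hi2 := hi'
          rw [Finset.mem_Icc] at hi2
          have h1 := hg j i hj hi.1 (by omega)
          have h2 := hg (i + 1) k (by omega) (by omega) hkt
          by_cases hlt : g i < g k
          · simp [ind, h1, hlt, hε i hi2.1 hi2.2]
          · simp only [ind, hlt, and_false, if_false, zero_mul]
            push Not at hlt
            linarith
      _ ≤ _ := Finset.sum_le_sum_of_subset_of_nonneg hsub fun i hi _ =>
          mul_nonneg (ind_nonneg _) (hε0 i hi)

lemma visited_mem (σ : Sub E O → E) (φ : E → O) (hp : 0 < M.p φ) (ψ : Sub E O)
    (hv : visits M σ φ ψ) (hf : M.f ψ < M.Q) : ψ ∈ Nnodes M σ := by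
  unfold Nnodes
  rw [Finset.mem_filter]
  refine ⟨Finset.mem_univ _, hf, ?_⟩
  unfold Pr
  refine Finset.sum_pos' (fun φ' _ => ?_) ⟨φ, Finset.mem_univ _, ?_⟩
  · split_ifs
    · exact M.p_nonneg _
    · exact le_rfl
  · rw [if_pos hv]
    exact hp

/-- The expected cost of the adaptive greedy policy satisfies
`E[C(σ)] ≤ α·E[C(π*)]·∑_{i=1}^{|N(σ)|} ε_i / (Q − f(ρ_i))`. -/
theorem greedy_cost_bound
    (M : Problem E O) (α : ℝ) (hα : 1 ≤ α)
    (σ : Sub E O → E) (hσ : IsGreedy M α σ)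
    (πs : Sub E O → E) (hπs : IsOptimal M πs)
    (t : ℕ) (ρ : ℕ → Sub E O)
    (hcard : t = (Nnodes M σ).card)
    (hρmem : ∀ i, 1 ≤ i → i ≤ t → ρ i ∈ Nnodes M σ)
    (hρinj : ∀ i j, 1 ≤ i → i ≤ t → 1 ≤ j → j ≤ t → ρ i = ρ j → i = j)
    (hρmono : ∀ i j, 1 ≤ i → i ≤ j → j ≤ t → M.f (ρ i) ≤ M.f (ρ j))
    (ε : ℕ → ℝ)
    (hε : ∀ i, 1 ≤ i → i < t → ε i = M.f (ρ (i + 1)) - M.f (ρ i))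
    (hεt : 1 ≤ t → ε t = M.Q - M.f (ρ t)) :
    Ex M (C M σ)
      ≤ α * Ex M (C M πs) * ∑ i ∈ Finset.Icc 1 t, ε i / (M.Q - M.f (ρ i)) := by
  have hα0 : 0 ≤ α := by linarith
  have hfρ : ∀ i, 1 ≤ i → i ≤ t → M.f (ρ i) < M.Q := by
    intro i h1 h2
    have := hρmem i h1 h2
    unfold Nnodes at this
    rw [Finset.mem_filter] at this
    exact this.2.1
  have hsurj : ∀ ψ ∈ Nnodes M σ, ∃ i, 1 ≤ i ∧ i ≤ t ∧ ρ i = ψ := by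
    have himg : (Finset.Icc 1 t).image ρ = Nnodes M σ := by
      apply Finset.eq_of_subset_of_card_le
      · intro ψ hψ
        obtain ⟨i, hi, rfl⟩ := Finset.mem_image.1 hψ
        rw [Finset.mem_Icc] at hi
        exact hρmem i hi.1 hi.2
      · rw [Finset.card_image_of_injOn]
        · simp [← hcard]
        · intro i hi j hj hij
          simp only [Finset.coe_Icc, Set.mem_Icc] at hi hj
          exact hρinj i j hi.1 hi.2 hj.1 hj.2 hij
    intro ψ hψ
    rw [← himg] at hψ
    obtain ⟨i, hi, rfl⟩ := Finset.mem_image.1 hψ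
    rw [Finset.mem_Icc] at hi
    exact ⟨i, hi.1, hi.2, rfl⟩
  let g : ℕ → ℝ := fun i => if i ≤ t then M.f (ρ i) else M.Q
  have hgρ : ∀ i, i ≤ t → g i = M.f (ρ i) := fun i hi => by simp [g, hi]
  have hgt : g (t + 1) = M.Q := by simp [g]
  have hgmono : ∀ i j, 1 ≤ i → i ≤ j → j ≤ t + 1 → g i ≤ g j := by
    intro i j hi hij hj
    rcases Nat.lt_or_ge t j with h | h
    · have hj' : j = t + 1 := by omega
      subst hj'
      rcases Nat.lt_or_ge t i with h' | h'
      · have : i = t + 1 := by omega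
        rw [this]
      · rw [hgρ i h', hgt]
        exact (hfρ i hi h').le
    · rw [hgρ i (by omega), hgρ j h]
      exact hρmono i j hi hij h
  have hgε : ∀ i, 1 ≤ i → i ≤ t → ε i = g (i + 1) - g i := by
    intro i hi hit
    rcases Nat.lt_or_ge i t with h | h
    · rw [hgρ i hit, hgρ (i + 1) h]
      exact hε i hi h
    · have : i = t := by omega
      subst this
      rw [hgt, hgρ i le_rfl]
      exact hεt hi
  have hε0 : ∀ i, 1 ≤ i → i ≤ t → 0 ≤ ε i := by
    intro i hi hit
    rw [hgε i hi hit]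
    have := hgmono i (i + 1) hi (by omega) (by omega)
    linarith
  have step1 : Ex M (C M σ) ≤
      ∑ ψ, if M.f ψ < M.Q then Ex M (fun φ => ind (visits M σ φ ψ)) * M.c (σ ψ) else 0 := by
    refine (Ex_mono M _ _ fun φ _ => C_le M σ φ).trans (le_of_eq ?_)
    rw [Ex_sum]
    refine Finset.sum_congr rfl fun ψ _ => ?_
    split_ifs with hf
    · rw [mul_comm, ← Ex_mul]
      congr 1
      funext φ; ring
    · exact Ex_const M 0
  have step2 : ∀ ψ, (if M.f ψ < M.Q then Ex M (fun φ => ind (visits M σ φ ψ)) * M.c (σ ψ) else 0)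
      ≤ ∑ i ∈ Finset.Icc 1 t,
          ε i * (price M ψ (σ ψ) * Ex M (fun φ => ind (lastAt M σ (M.f (ρ i)) ψ φ))) := by
    intro ψ
    split_ifs with hf
    · have hpos := greedy_pos M hα hσ ψ hf
      have hpr : 0 ≤ price M ψ (σ ψ) := div_nonneg (M.c_pos _).le hpos.le
      have hn := hσ.1 ψ hf
      have h1 : Ex M (fun φ => ind (visits M σ φ ψ) * Fm M ψ (σ ψ) φ)
          = Ex M (fun φ => ind (visits M σ φ ψ)) * Ex M (Fm M ψ (σ ψ)) :=
        Ex_indep M (σ ψ) (fun φ => ind (visits M σ φ ψ))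
          (fun φ o => ind_congr (visits_indep M σ φ (σ ψ) o ψ hn))
          (fun o => M.f (updateSub ψ (σ ψ) o) - M.f ψ)
      have h2 : M.c (σ ψ) = price M ψ (σ ψ) * Ex M (Fm M ψ (σ ψ)) := by
        unfold price
        rw [div_mul_cancel₀ _ hpos.ne']
      calc Ex M (fun φ => ind (visits M σ φ ψ)) * M.c (σ ψ)
          = price M ψ (σ ψ) * Ex M (fun φ => ind (visits M σ φ ψ) * Fm M ψ (σ ψ) φ) := by
            rw [h1, h2]; ring
        _ ≤ price M ψ (σ ψ) * Ex M (fun φ => ∑ i ∈ Finset.Icc 1 t,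
              ε i * ind (lastAt M σ (M.f (ρ i)) ψ φ)) := by
            refine mul_le_mul_of_nonneg_left (Ex_mono M _ _ fun φ hp => ?_) hpr
            by_cases hv : visits M σ φ ψ
            · obtain ⟨j, hj1, hjt, hj⟩ := hsurj ψ (visited_mem M σ φ hp ψ hv hf)
              have hk : ∃ k, 1 ≤ k ∧ k ≤ t + 1 ∧
                  g k = M.f (updateSub ψ (σ ψ) (φ (σ ψ))) := by
                obtain ⟨n, hn'⟩ := hv
                have hex : execAux M σ φ (n + 1) = updateSub ψ (σ ψ) (φ (σ ψ)) := by
                  rw [exec_succ, hn']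
                  unfold stepPol
                  rw [if_pos hf]
                by_cases hf' : M.f (updateSub ψ (σ ψ) (φ (σ ψ))) < M.Q
                · obtain ⟨k, hk1, hkt, hk⟩ :=
                    hsurj _ (visited_mem M σ φ hp _ ⟨n + 1, hex⟩ hf')
                  exact ⟨k, hk1, by omega, by rw [hgρ k hkt, hk]⟩
                · refine ⟨t + 1, by omega, le_rfl, ?_⟩
                  rw [hgt]
                  refine le_antisymm (not_lt.1 hf') ?_
                  rw [← hex, ← M.f_cover φ]
                  exact M.f_mono _ _ (exec_sub_real M σ φ _)
              obtain ⟨k, hk1, hkt, hk⟩ := hk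
              have h3 := split_le t g ε hgmono hgε j k hj1 (by omega) hk1 hkt
              have hgj : g j = M.f ψ := by rw [hgρ j hjt, hj]
              have h4 : ind (visits M σ φ ψ) * Fm M ψ (σ ψ) φ = g k - g j := by
                simp [ind, hv, Fm, hk, hgj]
              rw [h4]
              refine h3.trans (le_of_eq ?_)
              refine Finset.sum_congr rfl fun i hi => ?_
              rw [Finset.mem_Icc] at hi
              rw [mul_comm]
              congr 1
              apply ind_congr
              unfold lastAt
              rw [hgj, hk, hgρ i hi.2]
              simp [hv]
            · have : ∀ i, ¬ lastAt M σ (M.f (ρ i)) ψ φ := fun i h => hv h.1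
              simp [ind, hv, this]
        _ = _ := by
            rw [Ex_sum, Finset.mul_sum]
            refine Finset.sum_congr rfl fun i _ => ?_
            rw [Ex_mul]; ring
    · refine Finset.sum_nonneg fun i hi => ?_
      rw [Finset.mem_Icc] at hi
      have : ∀ φ, ¬ lastAt M σ (M.f (ρ i)) ψ φ := fun φ h =>
        hf (lt_of_le_of_lt h.2.1 (hfρ i hi.1 hi.2))
      simp [ind, this, Ex]
  refine (step1.trans (Finset.sum_le_sum fun ψ _ => step2 ψ)).trans ?_
  rw [Finset.sum_comm, Finset.mul_sum]
  refine Finset.sum_le_sum fun i hi => ?_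
  rw [Finset.mem_Icc] at hi
  have hb := hfρ i hi.1 hi.2
  have hlev := level_bound M hα σ πs hσ hπs.1 hb
  rw [← Finset.mul_sum]
  have hQ : 0 < M.Q - M.f (ρ i) := by linarith
  have h1 : ∑ ψ, price M ψ (σ ψ) * Ex M (fun φ => ind (lastAt M σ (M.f (ρ i)) ψ φ))
      ≤ α * Ex M (C M πs) / (M.Q - M.f (ρ i)) := by
    rw [le_div_iff₀ hQ]
    linarith
  refine (mul_le_mul_of_nonneg_left h1 (hε0 i hi.1 hi.2)).trans (le_of_eq ?_)
  ring

end
end SSC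
end

section
/- Let Q > 0 and η > 0, let t ≥ 1, and let 0 = a_1 ≤ a_2 ≤ … ≤ a_t < a_{t+1} = Q be real numbers with ε_i = a_{i+1} − a_i for i = 1, …, t and ε_t ≥ η. Then Σ_{i=1}^{t} ε_i/(Q − a_i) ≤ 1 + ln(Q/η). -/
/-!
Common framework for the Stochastic Submodular Cover problem
(Hellerstein–Kletenik–Parthasarathy, "A Tight Bound for Stochastic Submodular Cover").
-/

namespace SSC

open Finset
open scoped Classical

noncomputable section

variable {E O : Type*}

variable [Fintype E] [DecidableEq E] [Fintype O] [DecidableEq O]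

variable (M : Problem E O)

/-- Azar–Gamzu style bound, real-valued case: for
`0 = a 1 ≤ a 2 ≤ ⋯ ≤ a t < a (t+1) = Q` with last gap `Q - a t ≥ η > 0`,
`∑_{i=1}^{t} (a (i+1) - a i) / (Q - a i) ≤ 1 + ln (Q / η)`. -/
theorem sum_gap_ratio_le_log
    (Q η : ℝ) (hQ : 0 < Q) (hη : 0 < η) (t : ℕ) (ht : 1 ≤ t)
    (a : ℕ → ℝ) (ha1 : a 1 = 0)
    (hmono : ∀ i, 1 ≤ i → i < t → a i ≤ a (i + 1))
    (hat : a t < Q) (hat1 : a (t + 1) = Q)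
    (hlast : η ≤ Q - a t) :
    ∑ i ∈ Finset.Icc 1 t, (a (i + 1) - a i) / (Q - a i) ≤ 1 + Real.log (Q / η) := by
  have key : ∀ n, 1 ≤ n → n ≤ t → a n < Q →
      ∑ i ∈ Finset.Ico 1 n, (a (i + 1) - a i) / (Q - a i) ≤ Real.log Q - Real.log (Q - a n) := by
    intro n hn
    induction n, hn using Nat.le_induction with
    | base => intro _ _; simp [ha1]
    | succ n hn ih =>
      intro hnt hlt
      have hm := hmono n hn (by omega)
      have h1 := ih (by omega) (by linarith)
      rw [Finset.sum_Ico_succ_top hn]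
      have hx : 0 < Q - a n := by linarith
      have hy : 0 < Q - a (n + 1) := by linarith
      have h2 := Real.log_le_sub_one_of_pos (div_pos hy hx)
      rw [Real.log_div hy.ne' hx.ne'] at h2
      have h3 : (a (n + 1) - a n) / (Q - a n) = 1 - (Q - a (n + 1)) / (Q - a n) := by
        field_simp
        ring
      linarith
  have h := key t ht le_rfl hat
  have hx : 0 < Q - a t := by linarith
  have hsplit : ∑ i ∈ Finset.Icc 1 t, (a (i + 1) - a i) / (Q - a i)
      = ∑ i ∈ Finset.Ico 1 t, (a (i + 1) - a i) / (Q - a i) + 1 := by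
    rw [← Finset.Ico_add_one_right_eq_Icc, Finset.sum_Ico_succ_top ht, hat1, div_self hx.ne']
  have hl := Real.log_le_log hη hlast
  rw [hsplit, Real.log_div hQ.ne' hη.ne']
  linarith

end
end SSC
end
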